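/- Let G = (V, E) be a finite undirected graph on nodes 1, …, n, let Z₁, …, Zₙ be nonempty finite types, and let X = (x₁, …, xₙ) be fixed observations. Suppose the posterior is a pairwise Markov random field: p(z₁,…,zₙ | X) = (1/C) ∏ᵢ φ(zᵢ, xᵢ) · ∏_{(i,j) ∈ E} ψ(zᵢ, zⱼ), where φ and ψ are strictly positive potential functions and C > 0 is the normalizing constant. Suppose q* = (q₁*, …, qₙ*) is a family of strictly positive pmfs, qᵢ* on Zᵢ, such that for every i, qᵢ* minimizes the free energy F(q) = Σ_z (∏ⱼ qⱼ(zⱼ)) log((∏ⱼ qⱼ(zⱼ)) / p(z | X)) when all factors qⱼ*, j ≠ i, are held fixed. Then for each node i there is a constant cᵢ such that for all zᵢ ∈ Zᵢ: log qᵢ*(zᵢ) = cᵢ + log φ(zᵢ, xᵢ) + Σ_{j ∈ N(i)} Σ_{zⱼ ∈ Zⱼ} qⱼ*(zⱼ) · log ψ(zᵢ, zⱼ), where N(i) denotes the set of neighbors of node i in G. -/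

import Mathlib

/-!
With all factors but the `i`-th held fixed, the free energy is, up to a constant, a
one-variable Gibbs functional `r ↦ ∑ a, r a * (log (r a) - g a)`, where
`g a = log φᵢ(a, xᵢ) + ∑_{j ∈ N(i)} E_{q_j} [log ψ(a, z_j)]` (`freeEnergy_update`).  Indeed, under a
product distribution the expectation of a function of one coordinate, or of two distinct
coordinates, only involves the factors at those coordinates (`mfExp_single`, `mfExp_pair`),
and `log p` is a sum of such functions.

By the strict inequality `log t < t - 1` for `t ≠ 1`, a Gibbs functional has the unique
minimizer `exp g / ∑ exp g` among strictly positive pmfs (`gibbs_minimizer`).  Hence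
`log qᵢ*` and `g` differ by the constant `-log (∑ exp g)`.
-/

open Finset

/-! ### Expectations under a product distribution -/

section MeanField

variable {ι : Type*} [Fintype ι] [DecidableEq ι] {Z : ι → Type*} [∀ j, Fintype (Z j)]

/-- The expectation of `f` under the product of the factors `Q j`.  The factors are arbitrary
weights; normalization is a hypothesis wherever it matters. -/
noncomputable def mfExp (Q : ∀ j, Z j → ℝ) (f : (∀ j, Z j) → ℝ) : ℝ :=
  ∑ z, (∏ j, Q j (z j)) * f z

lemma mfExp_add (Q : ∀ j, Z j → ℝ) (f g : (∀ j, Z j) → ℝ) :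
    mfExp Q (fun z => f z + g z) = mfExp Q f + mfExp Q g := by
  simp [mfExp, mul_add, Finset.sum_add_distrib]

lemma mfExp_sub (Q : ∀ j, Z j → ℝ) (f g : (∀ j, Z j) → ℝ) :
    mfExp Q (fun z => f z - g z) = mfExp Q f - mfExp Q g := by
  simp [mfExp, mul_sub, Finset.sum_sub_distrib]

lemma mfExp_sum {κ : Type*} (s : Finset κ) (Q : ∀ j, Z j → ℝ) (f : κ → (∀ j, Z j) → ℝ) :
    mfExp Q (fun z => ∑ k ∈ s, f k z) = ∑ k ∈ s, mfExp Q (f k) := by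
  simp only [mfExp, Finset.mul_sum]
  exact Finset.sum_comm

lemma sum_prod_eq (Q : ∀ j, Z j → ℝ) :
    ∑ z : ∀ j, Z j, ∏ j, Q j (z j) = ∏ j, ∑ a, Q j a := by
  rw [Finset.prod_univ_sum, Fintype.piFinset_univ]

lemma mfExp_const (Q : ∀ j, Z j → ℝ) (hQ : ∀ j, ∑ a, Q j a = 1) (c : ℝ) :
    mfExp Q (fun _ => c) = c := by
  simp [mfExp, ← Finset.sum_mul, sum_prod_eq, hQ]

lemma prod_update_eq (Q : ∀ j, Z j → ℝ) (i : ι) (r : Z i → ℝ) (z : ∀ j, Z j) :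
    ∏ j, Function.update Q i r j (z j) = r (z i) * ∏ j ∈ Finset.univ.erase i, Q j (z j) := by
  rw [← Finset.mul_prod_erase _ _ (Finset.mem_univ i), Function.update_self]
  congr 1
  refine Finset.prod_congr rfl fun j hj => ?_
  rw [Function.update_of_ne (Finset.ne_of_mem_erase hj)]

lemma mfExp_single (Q : ∀ j, Z j → ℝ) (hQ : ∀ j, ∑ a, Q j a = 1) (i : ι) (f : Z i → ℝ) :
    mfExp Q (fun z => f (z i)) = ∑ a, Q i a * f a := by
  -- Absorb `f` into the `i`-th factor; the total mass of the new product is the product of masses.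
  have h : mfExp Q (fun z => f (z i))
      = ∑ z : ∀ j, Z j, ∏ j, Function.update Q i (fun a => Q i a * f a) j (z j) := by
    refine Finset.sum_congr rfl fun z _ => ?_
    rw [prod_update_eq, ← Finset.mul_prod_erase _ _ (Finset.mem_univ i)]
    ring
  rw [h, sum_prod_eq, ← Finset.mul_prod_erase _ _ (Finset.mem_univ i), Function.update_self,
    Finset.prod_eq_one, mul_one]
  intro j hj
  rw [Function.update_of_ne (Finset.ne_of_mem_erase hj), hQ]

variable [∀ j, DecidableEq (Z j)]

lemma sum_update_eq_one (Q : ∀ j, Z j → ℝ) (hQ : ∀ j, ∑ a, Q j a = 1) (i : ι) (r : Z i → ℝ)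
    (hr : ∑ a, r a = 1) (j : ι) : ∑ a, Function.update Q i r j a = 1 := by
  by_cases h : j = i
  · subst h; simpa using hr
  · simpa [Function.update_of_ne h] using hQ j

/-- Conditioning on the `i`-th coordinate: the other factors are kept and the `i`-th one is replaced
by a point mass. -/
lemma mfExp_cond (Q : ∀ j, Z j → ℝ) (i : ι) (f : Z i → (∀ j, Z j) → ℝ) :
    mfExp Q (fun z => f (z i) z)
      = ∑ b, Q i b * mfExp (Function.update Q i (Pi.single b 1)) (f b) := by
  simp only [mfExp, Finset.mul_sum]
  rw [Finset.sum_comm]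
  refine Finset.sum_congr rfl fun z _ => ?_
  rw [Finset.sum_eq_single (z i)]
  · rw [prod_update_eq, ← Finset.mul_prod_erase _ _ (Finset.mem_univ i)]
    simp [mul_assoc]
  · intro b _ hb
    rw [prod_update_eq]
    simp [Pi.single_eq_of_ne hb.symm]
  · simp

lemma mfExp_pair (Q : ∀ j, Z j → ℝ) (hQ : ∀ j, ∑ a, Q j a = 1) {i k : ι} (hik : i ≠ k)
    (f : Z i → Z k → ℝ) :
    mfExp Q (fun z => f (z i) (z k)) = ∑ a, Q i a * ∑ b, Q k b * f a b := by
  rw [mfExp_cond Q i (fun a z => f a (z k))]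
  refine Finset.sum_congr rfl fun a _ => ?_
  rw [mfExp_single _ (sum_update_eq_one Q hQ i _ (by simp)) k (f a),
    Function.update_of_ne hik.symm]

end MeanField

/-! ### The minimizer of a Gibbs functional -/

/-- A strictly positive pmf doing at least as well, for the Gibbs functional
`r ↦ ∑ a, r a * (log (r a) - g a)`, as every strictly positive pmf is the normalization of
`exp g`. -/
lemma gibbs_minimizer {A : Type*} [Fintype A] [Nonempty A] (g q : A → ℝ)
    (hq : ∀ a, 0 < q a) (hq1 : ∑ a, q a = 1)
    (hmin : ∀ r : A → ℝ, (∀ a, 0 < r a) → ∑ a, r a = 1 →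
      ∑ a, q a * (Real.log (q a) - g a) ≤ ∑ a, r a * (Real.log (r a) - g a)) (a : A) :
    Real.log (q a) = -Real.log (∑ b, Real.exp (g b)) + g a := by
  set S := ∑ b, Real.exp (g b) with hS
  have hSpos : 0 < S := Finset.sum_pos (fun b _ => Real.exp_pos _) Finset.univ_nonempty
  set r : A → ℝ := fun b => Real.exp (g b) / S with hr
  have hrpos : ∀ b, 0 < r b := fun b => div_pos (Real.exp_pos _) hSpos
  have hr1 : ∑ b, r b = 1 := by
    rw [hr, ← Finset.sum_div, div_self hSpos.ne']
  have hlog : ∀ b, Real.log (r b) = g b - Real.log S := fun b => by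
    rw [hr, Real.log_div (Real.exp_pos _).ne' hSpos.ne', Real.log_exp]
  have h := hmin r hrpos hr1
  have hR : ∑ b, r b * (Real.log (r b) - g b) = -Real.log S := by
    simp_rw [hlog, sub_sub_cancel_left, ← Finset.sum_mul, hr1, one_mul]
  rw [hR] at h
  -- `q ≠ r` would make the relative entropy `∑ b, q b * (log (q b) - log (r b))` positive.
  have key : q a = r a := by
    by_contra hne
    have hterm : ∀ b, q b * (Real.log (r b) - Real.log (q b)) ≤ r b - q b := fun b => by
      have := Real.log_le_sub_one_of_pos (div_pos (hrpos b) (hq b))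
      rw [Real.log_div (hrpos b).ne' (hq b).ne'] at this
      calc _ ≤ q b * (r b / q b - 1) := mul_le_mul_of_nonneg_left this (hq b).le
        _ = _ := by have := (hq b).ne'; field_simp
    have hstrict : q a * (Real.log (r a) - Real.log (q a)) < r a - q a := by
      have h1 : r a / q a ≠ 1 := fun h1 => hne ((div_eq_one_iff_eq (hq a).ne').1 h1).symm
      have := Real.log_lt_sub_one_of_pos (div_pos (hrpos a) (hq a)) h1
      rw [Real.log_div (hrpos a).ne' (hq a).ne'] at this
      calc _ < q a * (r a / q a - 1) := mul_lt_mul_of_pos_left this (hq a)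
        _ = _ := by have := (hq a).ne'; field_simp
    have hlt := Finset.sum_lt_sum (fun b _ => hterm b) ⟨a, Finset.mem_univ a, hstrict⟩
    rw [Finset.sum_sub_distrib, hr1, hq1, sub_self] at hlt
    have : ∑ b, q b * (Real.log (r b) - Real.log (q b))
        = -(∑ b, q b * (Real.log (q b) - g b)) - Real.log S := by
      calc _ = ∑ b, (-(q b * (Real.log (q b) - g b)) - q b * Real.log S) :=
            Finset.sum_congr rfl fun b _ => by rw [hlog]; ring
        _ = _ := by
            rw [Finset.sum_sub_distrib, Finset.sum_neg_distrib, ← Finset.sum_mul, hq1, one_mul]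
    linarith
  rw [key, hlog]
  ring

/-! ### The free energy as a function of one factor -/

/-- The contribution of the edges at `i` to a sum over the edges (each listed once, smaller
endpoint first), as a sum over the neighbors of `i`. -/
lemma sum_edges_at {n : ℕ} (G : SimpleGraph (Fin n)) [DecidableRel G.Adj] (i : Fin n)
    (T : Fin n → Fin n → ℝ) (hT : ∀ a b, T a b = T b a) :
    ∑ e ∈ (Finset.univ.filter (fun e : Fin n × Fin n => e.1 < e.2 ∧ G.Adj e.1 e.2)).filter
        (fun e => e.1 = i ∨ e.2 = i), T e.1 e.2
      = ∑ j ∈ G.neighborFinset i, T i j := by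
  refine Finset.sum_bij' (fun e _ => if e.1 = i then e.2 else e.1)
    (fun j _ => if i < j then (i, j) else (j, i)) ?_ ?_ ?_ ?_ ?_
  · rintro ⟨a, b⟩ h
    simp only [Finset.mem_filter, Finset.mem_univ, true_and] at h
    obtain ⟨⟨h1, h2⟩, rfl | rfl⟩ := h
    · simpa using h2
    · simpa [h1.ne] using h2.symm
  · intro j h
    rw [SimpleGraph.mem_neighborFinset] at h
    have hne := h.ne
    split_ifs with hlt
    · simp [hlt, h]
    · simp [h.symm, lt_of_le_of_ne (not_lt.1 hlt) hne.symm]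
  · rintro ⟨a, b⟩ h
    simp only [Finset.mem_filter, Finset.mem_univ, true_and] at h
    obtain ⟨⟨h1, h2⟩, rfl | rfl⟩ := h
    · simp [h1]
    · simp [h1.ne, h1.le]
  · intro j h
    rw [SimpleGraph.mem_neighborFinset] at h
    have hne := h.ne
    split_ifs <;> simp_all
  · rintro ⟨a, b⟩ h
    simp only [Finset.mem_filter, Finset.mem_univ, true_and] at h
    obtain ⟨⟨h1, h2⟩, rfl | rfl⟩ := h
    · simp
    · simp [h1.ne, hT a b]

/-- The free energy of a pairwise Markov random field at a product distribution, as a sum of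
node terms and edge terms. -/
lemma freeEnergy_eq {n : ℕ} (Z : Fin n → Type*) [∀ j, Fintype (Z j)] [∀ j, DecidableEq (Z j)]
    (F : Finset (Fin n × Fin n)) (hF : ∀ e ∈ F, e.1 ≠ e.2)
    (φ : ∀ i, Z i → ℝ) (ψ : ∀ i j, Z i → Z j → ℝ)
    (hφ : ∀ i a, 0 < φ i a) (hψ : ∀ i j a b, 0 < ψ i j a b) (C : ℝ) (hC : 0 < C)
    (Q : ∀ j, Z j → ℝ) (hQ : ∀ j a, 0 < Q j a) (hQ1 : ∀ j, ∑ a, Q j a = 1) :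
    ∑ z : ∀ j, Z j, (∏ j, Q j (z j)) * Real.log ((∏ j, Q j (z j)) /
        ((1 / C) * (∏ i, φ i (z i)) * ∏ e ∈ F, ψ e.1 e.2 (z e.1) (z e.2)))
      = Real.log C + ∑ j, ∑ a, Q j a * (Real.log (Q j a) - Real.log (φ j a))
        - ∑ e ∈ F, ∑ a, Q e.1 a * ∑ b, Q e.2 b * Real.log (ψ e.1 e.2 a b) := by
  have h : ∀ z : ∀ j, Z j, Real.log ((∏ j, Q j (z j)) /
        ((1 / C) * (∏ i, φ i (z i)) * ∏ e ∈ F, ψ e.1 e.2 (z e.1) (z e.2)))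
      = (Real.log C + ∑ j, (Real.log (Q j (z j)) - Real.log (φ j (z j))))
        - ∑ e ∈ F, Real.log (ψ e.1 e.2 (z e.1) (z e.2)) := fun z => by
    have h1 : ∏ j, Q j (z j) ≠ 0 := Finset.prod_ne_zero_iff.2 fun j _ => (hQ j _).ne'
    have h2 : ∏ j, φ j (z j) ≠ 0 := Finset.prod_ne_zero_iff.2 fun j _ => (hφ j _).ne'
    have h3 : ∏ e ∈ F, ψ e.1 e.2 (z e.1) (z e.2) ≠ 0 :=
      Finset.prod_ne_zero_iff.2 fun e _ => (hψ _ _ _ _).ne'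
    have h4 : 1 / C ≠ 0 := (one_div_pos.2 hC).ne'
    rw [Real.log_div h1 (mul_ne_zero (mul_ne_zero h4 h2) h3), Real.log_mul (mul_ne_zero h4 h2) h3,
      Real.log_mul h4 h2, one_div, Real.log_inv, Real.log_prod fun j _ => (hQ j _).ne',
      Real.log_prod fun j _ => (hφ j _).ne', Real.log_prod fun e _ => (hψ _ _ _ _).ne',
      Finset.sum_sub_distrib]
    ring
  simp_rw [h]
  change mfExp Q (fun z => _) = _
  rw [mfExp_sub, mfExp_add, mfExp_const Q hQ1, mfExp_sum, mfExp_sum]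
  congr 1
  · congr 1
    exact Finset.sum_congr rfl fun j _ =>
      mfExp_single Q hQ1 j (fun a => Real.log (Q j a) - Real.log (φ j a))
  · exact Finset.sum_congr rfl fun e he =>
      mfExp_pair Q hQ1 (hF e he) (fun a b => Real.log (ψ e.1 e.2 a b))

/-- As a function of the `i`-th factor alone, the free energy, in the closed form given by
`freeEnergy_eq` without its constant `log C`, is a Gibbs functional up to a constant. -/
lemma freeEnergy_update {n : ℕ} (G : SimpleGraph (Fin n)) [DecidableRel G.Adj]
    (Z : Fin n → Type*) [∀ j, Fintype (Z j)] [∀ j, DecidableEq (Z j)]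
    (φ : ∀ i, Z i → ℝ) (ψ : ∀ i j, Z i → Z j → ℝ)
    (hψ : ∀ i j a b, ψ i j a b = ψ j i b a)
    (q : ∀ j, Z j → ℝ) (i : Fin n) : ∃ K : ℝ, ∀ r : Z i → ℝ, ∀ Q, Q = Function.update q i r →
      ∑ j, ∑ a, Q j a * (Real.log (Q j a) - Real.log (φ j a))
        - ∑ e ∈ Finset.univ.filter (fun e : Fin n × Fin n => e.1 < e.2 ∧ G.Adj e.1 e.2),
          ∑ a, Q e.1 a * ∑ b, Q e.2 b * Real.log (ψ e.1 e.2 a b)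
      = K + ∑ a, r a * (Real.log (r a) - (Real.log (φ i a) +
          ∑ j ∈ G.neighborFinset i, ∑ b, q j b * Real.log (ψ i j a b))) := by
  -- The constant collects the nodes other than `i` and the edges avoiding `i`.
  refine ⟨∑ j ∈ Finset.univ.erase i, ∑ a, q j a * (Real.log (q j a) - Real.log (φ j a))
    - ∑ e ∈ (Finset.univ.filter (fun e : Fin n × Fin n => e.1 < e.2 ∧ G.Adj e.1 e.2)).filter
        (fun e => ¬ (e.1 = i ∨ e.2 = i)),
          ∑ a, q e.1 a * ∑ b, q e.2 b * Real.log (ψ e.1 e.2 a b), ?_⟩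
  intro r Q hQ
  have hi : Q i = r := by rw [hQ, Function.update_self]
  have hne : ∀ j, j ≠ i → Q j = q j := fun j hj => by rw [hQ, Function.update_of_ne hj]
  rw [← Finset.add_sum_erase _ _ (Finset.mem_univ i),
    ← Finset.sum_filter_add_sum_filter_not _ (fun e : Fin n × Fin n => e.1 = i ∨ e.2 = i),
    sum_edges_at G i (fun j k => ∑ a, Q j a * ∑ b, Q k b * Real.log (ψ j k a b)) ?_, hi]
  · have h1 : ∑ j ∈ Finset.univ.erase i, ∑ a, Q j a * (Real.log (Q j a) - Real.log (φ j a))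
        = ∑ j ∈ Finset.univ.erase i, ∑ a, q j a * (Real.log (q j a) - Real.log (φ j a)) :=
      Finset.sum_congr rfl fun j hj => by rw [hne j (Finset.ne_of_mem_erase hj)]
    have h2 : ∑ e ∈ (Finset.univ.filter
          (fun e : Fin n × Fin n => e.1 < e.2 ∧ G.Adj e.1 e.2)).filter
          (fun e => ¬ (e.1 = i ∨ e.2 = i)),
          ∑ a, Q e.1 a * ∑ b, Q e.2 b * Real.log (ψ e.1 e.2 a b)
        = ∑ e ∈ (Finset.univ.filter
          (fun e : Fin n × Fin n => e.1 < e.2 ∧ G.Adj e.1 e.2)).filter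
          (fun e => ¬ (e.1 = i ∨ e.2 = i)),
          ∑ a, q e.1 a * ∑ b, q e.2 b * Real.log (ψ e.1 e.2 a b) :=
      Finset.sum_congr rfl fun e he => by
        have := (Finset.mem_filter.1 he).2
        push Not at this
        rw [hne _ this.1, hne _ this.2]
    have h3 : ∑ j ∈ G.neighborFinset i, ∑ a, r a * ∑ b, Q j b * Real.log (ψ i j a b)
        = ∑ a, r a * ∑ j ∈ G.neighborFinset i, ∑ b, q j b * Real.log (ψ i j a b) := by
      rw [Finset.sum_comm]
      refine Finset.sum_congr rfl fun a _ => ?_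
      rw [Finset.mul_sum]
      refine Finset.sum_congr rfl fun j hj => ?_
      rw [hne j ((G.mem_neighborFinset i j).1 hj).ne']
    rw [h1, h2, h3]
    simp only [mul_sub, mul_add, Finset.sum_sub_distrib, Finset.sum_add_distrib]
    ring
  · intro j k
    simp only [Finset.mul_sum]
    rw [Finset.sum_comm]
    refine Finset.sum_congr rfl fun b _ => Finset.sum_congr rfl fun a _ => ?_
    rw [hψ j k a b]
    ring

/-- Fixed point equation for mean-field variational inference on a pairwise Markov
random field.  The posterior `p(z | X)` factorizes into strictly positive node
potentials `φ i (z i) (x i)` and edge potentials `ψ i j (z i) (z j)` over the edges of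
an undirected graph `G` (each edge counted once, via `i < j`).  If every factor
`qstar i` of a strictly positive mean-field family minimizes the free energy with all
other factors held fixed, then for each node `i` there is a constant `cᵢ` with
`log (qstar i zᵢ) = cᵢ + log (φ i zᵢ xᵢ) + ∑_{j ∈ N(i)} ∑_{zⱼ} qstar j zⱼ * log (ψ i j zᵢ zⱼ)`. -/
theorem mrf_mean_field_fixed_point_equation
    {n : ℕ} (G : SimpleGraph (Fin n)) [DecidableRel G.Adj]
    (Z : Fin n → Type*) [∀ j, Fintype (Z j)] [∀ j, Nonempty (Z j)]
    [∀ j, DecidableEq (Z j)]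
    {X : Type*} (x : Fin n → X)
    (φ : ∀ i, Z i → X → ℝ) (ψ : ∀ i j, Z i → Z j → ℝ)
    (hφ_pos : ∀ i (zi : Z i) (xi : X), 0 < φ i zi xi)
    (hψ_pos : ∀ i j (zi : Z i) (zj : Z j), 0 < ψ i j zi zj)
    (hψ_symm : ∀ i j (zi : Z i) (zj : Z j), ψ i j zi zj = ψ j i zj zi)
    (C : ℝ) (hC : 0 < C)
    (p : (∀ j, Z j) → ℝ)
    (hp : ∀ z : ∀ j, Z j, p z =
      (1 / C) * (∏ i, φ i (z i) (x i)) *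
        ∏ e ∈ Finset.univ.filter (fun e : Fin n × Fin n => e.1 < e.2 ∧ G.Adj e.1 e.2),
          ψ e.1 e.2 (z e.1) (z e.2))
    (hp_sum : ∑ z : ∀ j, Z j, p z = 1)
    (FE : (∀ j, Z j → ℝ) → ℝ)
    (hFE : ∀ Q : ∀ j, Z j → ℝ, FE Q =
      ∑ z : ∀ j, Z j, (∏ j, Q j (z j)) * Real.log ((∏ j, Q j (z j)) / p z))
    (qstar : ∀ j, Z j → ℝ)
    (hq_pos : ∀ j (zj : Z j), 0 < qstar j zj)
    (hq_sum : ∀ j, ∑ zj : Z j, qstar j zj = 1)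
    (hmin : ∀ i, ∀ r : Z i → ℝ, (∀ zi : Z i, 0 < r zi) → (∑ zi : Z i, r zi = 1) →
      FE qstar ≤ FE (Function.update qstar i r)) :
    ∀ i, ∃ c : ℝ, ∀ zi : Z i,
      Real.log (qstar i zi) =
        c + Real.log (φ i zi (x i)) +
          ∑ j ∈ G.neighborFinset i, ∑ zj : Z j, qstar j zj * Real.log (ψ i j zi zj) := by
  intro i
  obtain ⟨K, hK⟩ := freeEnergy_update G Z (fun j a => φ j a (x j)) ψ hψ_symm qstar i
  have hval : ∀ r : Z i → ℝ, (∀ a, 0 < r a) → ∑ a, r a = 1 →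
      FE (Function.update qstar i r) = Real.log C + (K + ∑ a, r a * (Real.log (r a) -
        (Real.log (φ i a (x i)) +
          ∑ j ∈ G.neighborFinset i, ∑ b, qstar j b * Real.log (ψ i j a b)))) := by
    intro r hr hr1
    rw [hFE, ← hK r _ rfl, ← add_sub_assoc]
    simp_rw [hp]
    refine freeEnergy_eq Z _ (fun e he => (Finset.mem_filter.1 he).2.1.ne)
      (fun j a => φ j a (x j)) ψ (fun j a => hφ_pos j a _) hψ_pos C hC _ ?_
      (sum_update_eq_one qstar hq_sum i r hr1)
    intro j
    by_cases h : j = i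
    · subst h; simpa using hr
    · simpa [Function.update_of_ne h] using hq_pos j
  have hself := hval (qstar i) (hq_pos i) (hq_sum i)
  rw [Function.update_eq_self] at hself
  have hgibbs := gibbs_minimizer (fun a => Real.log (φ i a (x i)) +
    ∑ j ∈ G.neighborFinset i, ∑ b, qstar j b * Real.log (ψ i j a b))
    (qstar i) (hq_pos i) (hq_sum i) (fun r hr hr1 => by
      have := hmin i r hr hr1
      rw [hself, hval r hr hr1] at this
      linarith)
  exact ⟨_, fun zi => by rw [add_assoc]; exact hgibbs zi⟩
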